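/- For every natural number n ≥ 13 and for S = [6] as well as S = [7], M_S(n) + p_S(n−7) + p_S(n−8) + p_S(n−10) = p_S(n) + p_S(n−12) + p_S(n−13). -/

import Mathlib

/-- The product, with multiplicity, of the factorials of the elements of a multiset. -/
def factorialProd (A : Multiset ℕ) : ℕ := (A.map Nat.factorial).prod

/-- `MS S n`: the number of distinct multinomial coefficients with upper entry `n` and
lower entries in `S`. -/
noncomputable def MS (S : Set ℕ) (n : ℕ) : ℕ :=
  Set.ncard {v : ℕ | ∃ P : Nat.Partition n, (∀ j ∈ P.parts, j ∈ S) ∧ factorialProd P.parts = v}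

/-- `pS S n`: the number of partitions of `n` with all parts in `S`. -/
noncomputable def pS (S : Set ℕ) (n : ℕ) : ℕ :=
  Set.ncard {P : Nat.Partition n | ∀ j ∈ P.parts, j ∈ S}

/-!
Call two multisets equivalent if they have the same sum and the same product of factorials, so that
`M_S(n)` counts equivalence classes of partitions of `n`. The equivalences `{2, 2, 3} ~ {1, 1, 1,
4}`, `{3, 5} ~ {1, 1, 6}` and `{1, 4, 5} ~ {2, 2, 6}`, read from left to right, lower the number of
parts equal to `3` or `5`; hence every class contains a multiset that includes none of the three
left-hand sides.

Such a reduced multiset is unique in its class. After removing their common parts, two equivalent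
multisets have no prime as their largest part, so if all parts above `6` are prime, only parts at
most `6` remain; comparing sums and the exponents of `2`, `3` and `5` shows that their multiplicity
vectors differ by an integer combination of the first two relations, and the signs of the
coefficients force one of them to include a left-hand side.

Thus `M_S(n)` counts the reduced partitions of `n`. The partitions including a given `D` with sum
`d` number `p_S(n - d)`, and inclusion-exclusion over the three left-hand sides gives the formula;
the terms for `{2, 2, 3} ∪ {1, 4, 5}` and for all three cancel because this union already includes
`{3, 5}`.
-/

/-- The multisets of elements of `S` with sum `n`: for `0 ∉ S`, the partitions of `n` with all parts
in `S`, stripped of the positivity proof carried by `Nat.Partition`. -/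
def partitionsIn (S : Set ℕ) (n : ℕ) : Set (Multiset ℕ) :=
  {A | A.sum = n ∧ ∀ j ∈ A, j ∈ S}

/-- Two multisets are factorial equivalent if they have the same sum and the same product of
factorials, that is, if they are the lower entries of equal multinomial coefficients with equal
upper entries. -/
def FactorialEquiv (A B : Multiset ℕ) : Prop :=
  A.sum = B.sum ∧ factorialProd A = factorialProd B

/-- Irreducibility with respect to the rewriting rules `{2, 2, 3} → {1, 1, 1, 4}`,
`{3, 5} → {1, 1, 6}` and `{1, 4, 5} → {2, 2, 6}`: none of the left-hand sides is included. -/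
def IsFactorialReduced (A : Multiset ℕ) : Prop :=
  ¬ {2, 2, 3} ≤ A ∧ ¬ {3, 5} ≤ A ∧ ¬ {1, 4, 5} ≤ A

section Partitions

variable {S : Set ℕ}

theorem partitionsIn_eq_image_parts (hS : 0 ∉ S) (n : ℕ) :
    partitionsIn S n = Nat.Partition.parts '' {P : Nat.Partition n | ∀ j ∈ P.parts, j ∈ S} := by
  ext A
  constructor
  · rintro ⟨hsum, hA⟩
    have hpos : ∀ {j}, j ∈ A → 0 < j := fun hj =>
      Nat.pos_of_ne_zero fun hj0 => hS (hj0 ▸ hA _ hj)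
    exact ⟨⟨A, hpos, hsum⟩, hA, rfl⟩
  · rintro ⟨P, hP, rfl⟩
    exact ⟨P.parts_sum, hP⟩

theorem partitionsIn_finite (hS : 0 ∉ S) (n : ℕ) : (partitionsIn S n).Finite := by
  rw [partitionsIn_eq_image_parts hS]
  exact (Set.toFinite _).image _

theorem pS_eq_ncard_partitionsIn (hS : 0 ∉ S) (n : ℕ) : pS S n = (partitionsIn S n).ncard := by
  rw [partitionsIn_eq_image_parts hS, pS,
    Set.ncard_image_of_injective _ fun _ _ => Nat.Partition.ext]

theorem MS_eq_ncard_image_factorialProd (hS : 0 ∉ S) (n : ℕ) :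
    MS S n = (factorialProd '' partitionsIn S n).ncard := by
  rw [partitionsIn_eq_image_parts hS, MS, Set.image_image]
  rfl

theorem partitionsIn_inter_Ici {D : Multiset ℕ} (hD : ∀ j ∈ D, j ∈ S) {n : ℕ} (hn : D.sum ≤ n) :
    partitionsIn S n ∩ Set.Ici D = (D + ·) '' partitionsIn S (n - D.sum) := by
  ext A
  constructor
  · rintro ⟨⟨hsum, hA⟩, hDA⟩
    obtain ⟨B, rfl⟩ := Multiset.le_iff_exists_add.1 hDA
    rw [Multiset.sum_add] at hsum
    exact ⟨B, ⟨by omega, fun j hj => hA j (Multiset.mem_add.2 (.inr hj))⟩, rfl⟩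
  · rintro ⟨B, ⟨hsum, hB⟩, rfl⟩
    refine ⟨⟨?_, fun j hj => (Multiset.mem_add.1 hj).elim (hD j) (hB j)⟩,
      Multiset.le_add_right D B⟩
    rw [Multiset.sum_add, hsum, Nat.add_sub_cancel' hn]

theorem ncard_partitionsIn_inter_Ici (hS : 0 ∉ S) {D : Multiset ℕ} (hD : ∀ j ∈ D, j ∈ S) {n : ℕ}
    (hn : D.sum ≤ n) : (partitionsIn S n ∩ Set.Ici D).ncard = pS S (n - D.sum) := by
  rw [partitionsIn_inter_Ici hD hn, pS_eq_ncard_partitionsIn hS,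
    Set.ncard_image_of_injective _ (add_right_injective D)]

end Partitions

theorem factorialProd_add (A B : Multiset ℕ) :
    factorialProd (A + B) = factorialProd A * factorialProd B := by
  simp [factorialProd]

theorem factorialProd_ne_zero (A : Multiset ℕ) : factorialProd A ≠ 0 := by
  simp [factorialProd, Multiset.prod_eq_zero_iff, Nat.factorial_ne_zero]

theorem factorization_factorialProd (A : Multiset ℕ) (p : ℕ) :
    (factorialProd A).factorization p = (A.map fun j => j.factorial.factorization p).sum := by
  induction A using Multiset.induction with
  | empty => simp [factorialProd]
  | cons a A ih =>
    rw [← Multiset.singleton_add, factorialProd_add, Nat.factorization_mul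
      (factorialProd_ne_zero _) (factorialProd_ne_zero _), Finsupp.add_apply, ih]
    simp [factorialProd]

theorem prime_dvd_factorialProd_iff {p : ℕ} (hp : p.Prime) {A : Multiset ℕ} :
    p ∣ factorialProd A ↔ ∃ j ∈ A, p ≤ j := by
  induction A using Multiset.induction with
  | empty => simp [factorialProd, hp.ne_one]
  | cons a A ih =>
    rw [← Multiset.singleton_add, factorialProd_add, hp.dvd_mul, ih]
    simp [factorialProd, hp.dvd_factorial]

namespace FactorialEquiv

variable {A B C : Multiset ℕ}

theorem symm (h : FactorialEquiv A B) : FactorialEquiv B A :=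
  ⟨h.1.symm, h.2.symm⟩

theorem trans (hAB : FactorialEquiv A B) (hBC : FactorialEquiv B C) : FactorialEquiv A C :=
  ⟨hAB.1.trans hBC.1, hAB.2.trans hBC.2⟩

theorem add_right_iff : FactorialEquiv (A + C) (B + C) ↔ FactorialEquiv A B := by
  simp only [FactorialEquiv, Multiset.sum_add, factorialProd_add, add_left_inj,
    mul_left_inj' (factorialProd_ne_zero C)]

theorem sub_sub (h : FactorialEquiv A B) : FactorialEquiv (A - B) (B - A) := by
  rw [← add_right_iff (C := A ∩ B), Multiset.sub_add_inter, Multiset.inter_comm,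
    Multiset.sub_add_inter]
  exact h

end FactorialEquiv

section Existence

variable {S : Set ℕ}

theorem not_le_of_forall_weight_le (w : Multiset ℕ →+ ℕ) {A D E : Multiset ℕ}
    (hA : ∀ j ∈ A, j ∈ S) (hE : ∀ j ∈ E, j ∈ S)
    (hmin : ∀ B, (∀ j ∈ B, j ∈ S) → FactorialEquiv A B → w A ≤ w B)
    (hDE : FactorialEquiv D E) (hw : w E < w D) : ¬ D ≤ A := by
  intro hDA
  obtain ⟨R, rfl⟩ := Multiset.le_iff_exists_add.1 hDA
  have hER : ∀ j ∈ E + R, j ∈ S := fun j hj =>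
    (Multiset.mem_add.1 hj).elim (hE j) fun hjR => hA j (Multiset.mem_add.2 (.inr hjR))
  have hle := hmin (E + R) hER (FactorialEquiv.add_right_iff.2 hDE)
  rw [map_add, map_add] at hle
  omega

theorem exists_isFactorialReduced_factorialEquiv (hS : Set.Icc 1 6 ⊆ S) {A : Multiset ℕ}
    (hA : ∀ j ∈ A, j ∈ S) :
    ∃ B, (∀ j ∈ B, j ∈ S) ∧ FactorialEquiv A B ∧ IsFactorialReduced B := by
  let w : Multiset ℕ →+ ℕ := Multiset.countPAddMonoidHom fun j => j = 3 ∨ j = 5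
  obtain ⟨B, ⟨hB, hAB⟩, hmin⟩ := exists_minimalFor_of_wellFoundedLT
    (fun B => (∀ j ∈ B, j ∈ S) ∧ FactorialEquiv A B) w ⟨A, hA, rfl, rfl⟩
  have hirr : ∀ D E : Multiset ℕ, (∀ j ∈ E, j ∈ Set.Icc 1 6) → FactorialEquiv D E →
      w E < w D → ¬ D ≤ B := fun D E hE =>
    not_le_of_forall_weight_le w hB (fun j hj => hS (hE j hj)) fun C hC hBC =>
      le_of_not_gt fun hlt => hlt.not_ge (hmin ⟨hC, hAB.trans hBC⟩ hlt.le)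
  exact ⟨B, hB, hAB,
    hirr {2, 2, 3} {1, 1, 1, 4} (by simp) ⟨by decide, by decide⟩ (by decide),
    hirr {3, 5} {1, 1, 6} (by simp) ⟨by decide, by decide⟩ (by decide),
    hirr {1, 4, 5} {2, 2, 6} (by simp) ⟨by decide, by decide⟩ (by decide)⟩

end Existence

section Uniqueness

variable {A B : Multiset ℕ}

theorem exists_lt_of_prime_mem {p : ℕ} (hp : p.Prime) (hpA : p ∈ A) (hpB : p ∉ B)
    (h : factorialProd A = factorialProd B) : ∃ j ∈ B, p < j := by
  have hdvd : p ∣ factorialProd B := h ▸ (prime_dvd_factorialProd_iff hp).2 ⟨p, hpA, le_rfl⟩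
  obtain ⟨j, hjB, hpj⟩ := (prime_dvd_factorialProd_iff hp).1 hdvd
  exact ⟨j, hjB, hpj.lt_of_ne fun hpj => hpB (hpj ▸ hjB)⟩

theorem forall_mem_le_of_forall_lt_prime {m : ℕ} (hAB : Disjoint A B)
    (h : factorialProd A = factorialProd B) (hm : ∀ j ∈ A + B, m < j → j.Prime) :
    ∀ j ∈ A + B, j ≤ m := by
  intro i hi
  by_contra! hmi
  obtain ⟨p, hp, hmax⟩ := (A + B).toFinset.exists_max_image id ⟨i, Multiset.mem_toFinset.2 hi⟩
  simp only [Multiset.mem_toFinset, id] at hp hmax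
  have hprime := hm p hp (hmi.trans_le (hmax i hi))
  have hdisj {j : ℕ} : j ∈ A → j ∉ B := Multiset.disjoint_left.1 hAB
  obtain ⟨j, hj, hpj⟩ : ∃ j ∈ A + B, p < j := by
    rcases Multiset.mem_add.1 hp with hpA | hpB
    · obtain ⟨j, hj, hpj⟩ := exists_lt_of_prime_mem hprime hpA (hdisj hpA) h
      exact ⟨j, Multiset.mem_add.2 (.inr hj), hpj⟩
    · obtain ⟨j, hj, hpj⟩ := exists_lt_of_prime_mem hprime hpB (fun hpA => hdisj hpA hpB) h.symm
      exact ⟨j, Multiset.mem_add.2 (.inl hj), hpj⟩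
  exact (hmax j hj).not_gt hpj

theorem disjoint_sub_sub {α : Type*} [DecidableEq α] (A B : Multiset α) :
    Disjoint (A - B) (B - A) := by
  rw [Multiset.disjoint_left]
  intro j hjA hjB
  rw [Multiset.mem_sub] at hjA hjB
  exact lt_asymm hjA hjB

theorem sum_map_eq_sum_count_mul {α : Type*} [DecidableEq α] {s : Finset α} {A : Multiset α}
    (hA : ∀ j ∈ A, j ∈ s) (f : α → ℕ) : (A.map f).sum = ∑ j ∈ s, A.count j * f j := by
  rw [Finset.sum_multiset_map_count]
  refine Finset.sum_subset (fun j hj => hA j (Multiset.mem_toFinset.1 hj)) fun j _ hj => ?_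
  rw [Multiset.count_eq_zero_of_notMem (mt Multiset.mem_toFinset.2 hj), zero_smul]

theorem factorization_factorialProd_of_le_six {p : ℕ} (hp : p.Prime)
    (hA : ∀ j ∈ A, j ∈ Finset.Icc 1 6) :
    (factorialProd A).factorization p = ∑ j ∈ Finset.Icc 1 6, A.count j * (j / p + j / p ^ 2) := by
  rw [factorization_factorialProd, sum_map_eq_sum_count_mul hA]
  refine Finset.sum_congr rfl fun j hj => ?_
  have hlog : Nat.log p j < 3 := Nat.log_lt_of_lt_pow (by grind) <|
    calc j < 2 ^ 3 := by grind
      _ ≤ p ^ 3 := Nat.pow_le_pow_left hp.two_le 3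
  rw [Nat.factorization_factorial hp hlog]
  simp [Finset.sum_Ico_succ_top]

/-- The coefficients `a` and `b` are those of the relations `{2, 2, 3} ~ {1, 1, 1, 4}` and
`{3, 5} ~ {1, 1, 6}`. -/
theorem FactorialEquiv.exists_count_eq (h : FactorialEquiv A B)
    (hA : ∀ j ∈ A, j ∈ Finset.Icc 1 6) (hB : ∀ j ∈ B, j ∈ Finset.Icc 1 6) :
    ∃ a b : ℤ, (A.count 1 : ℤ) = B.count 1 + 3 * a + 2 * b ∧ (A.count 2 : ℤ) = B.count 2 - 2 * a ∧
      (A.count 3 : ℤ) = B.count 3 - a - b ∧ (A.count 4 : ℤ) = B.count 4 + a ∧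
      (A.count 5 : ℤ) = B.count 5 - b ∧ (A.count 6 : ℤ) = B.count 6 + b := by
  have hsum : (A.map id).sum = (B.map id).sum := by simpa only [Multiset.map_id] using h.1
  rw [sum_map_eq_sum_count_mul hA, sum_map_eq_sum_count_mul hB] at hsum
  have hval {p : ℕ} (hp : p.Prime) :
      ∑ j ∈ Finset.Icc 1 6, A.count j * (j / p + j / p ^ 2)
        = ∑ j ∈ Finset.Icc 1 6, B.count j * (j / p + j / p ^ 2) := by
    rw [← factorization_factorialProd_of_le_six hp hA, h.2,
      factorization_factorialProd_of_le_six hp hB]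
  have hval2 := hval Nat.prime_two
  have hval3 := hval Nat.prime_three
  have hval5 := hval Nat.prime_five
  norm_num [Finset.sum_Icc_succ_top] at hsum hval2 hval3 hval5
  exact ⟨A.count 4 - B.count 4, A.count 6 - B.count 6, by omega⟩

theorem IsFactorialReduced.mono (hB : IsFactorialReduced B) (h : A ≤ B) : IsFactorialReduced A :=
  ⟨fun hA => hB.1 (hA.trans h), fun hA => hB.2.1 (hA.trans h), fun hA => hB.2.2 (hA.trans h)⟩

theorem le_of_forall_mem_count_le {α : Type*} [DecidableEq α] {D A : Multiset α}
    (h : ∀ j ∈ D, D.count j ≤ A.count j) : D ≤ A := by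
  refine Multiset.le_iff_count.2 fun j => ?_
  by_cases hj : j ∈ D
  · exact h j hj
  · simp [Multiset.count_eq_zero_of_notMem hj]

theorem IsFactorialReduced.not_le_count (h : IsFactorialReduced A) :
    ¬ (2 ≤ A.count 2 ∧ 1 ≤ A.count 3) ∧ ¬ (1 ≤ A.count 3 ∧ 1 ≤ A.count 5) ∧
      ¬ (1 ≤ A.count 1 ∧ 1 ≤ A.count 4 ∧ 1 ≤ A.count 5) := by
  refine ⟨fun hc => h.1 ?_, fun hc => h.2.1 ?_, fun hc => h.2.2 ?_⟩ <;>
    exact le_of_forall_mem_count_le (by simpa using hc)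

theorem IsFactorialReduced.count_six_le (hBred : IsFactorialReduced B) (h : FactorialEquiv A B)
    (hA : ∀ j ∈ A, j ∈ Finset.Icc 1 6) (hB : ∀ j ∈ B, j ∈ Finset.Icc 1 6) :
    A.count 6 ≤ B.count 6 := by
  obtain ⟨a, b, h1, -, h3, h4, h5, h6⟩ := h.exists_count_eq hA hB
  obtain ⟨-, h35, h145⟩ := hBred.not_le_count
  by_contra! hlt
  rcases lt_or_ge 0 (a + b) with hab | hab
  · exact h35 ⟨by omega, by omega⟩
  · exact h145 ⟨by omega, by omega, by omega⟩

theorem IsFactorialReduced.eq_of_factorialEquiv_of_le_six (hAred : IsFactorialReduced A)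
    (hBred : IsFactorialReduced B) (h : FactorialEquiv A B) (hA : ∀ j ∈ A, j ∈ Finset.Icc 1 6)
    (hB : ∀ j ∈ B, j ∈ Finset.Icc 1 6) : A = B := by
  obtain ⟨a, b, h1, h2, h3, h4, h5, h6⟩ := h.exists_count_eq hA hB
  have hb : b = 0 := by
    have := hBred.count_six_le h hA hB
    have := hAred.count_six_le h.symm hB hA
    omega
  have ha : a = 0 := by
    have hA223 := hAred.not_le_count.1
    have hB223 := hBred.not_le_count.1
    omega
  subst ha hb
  ext j
  by_cases hj : j ∈ Finset.Icc 1 6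
  · obtain ⟨hj1, hj6⟩ := Finset.mem_Icc.1 hj
    interval_cases j <;> omega
  · rw [Multiset.count_eq_zero_of_notMem (mt (hA j) hj),
      Multiset.count_eq_zero_of_notMem (mt (hB j) hj)]

theorem pos_of_mem_of_forall_prime {S : Set ℕ} (hS : ∀ j ∈ S, j ∉ Set.Icc 1 6 → j.Prime)
    {j : ℕ} (hj : j ∈ S) : 0 < j :=
  (em (j ∈ Set.Icc 1 6)).elim (fun h => h.1) fun h => (hS j hj h).pos

theorem IsFactorialReduced.eq_of_factorialEquiv {S : Set ℕ}
    (hS : ∀ j ∈ S, j ∉ Set.Icc 1 6 → j.Prime) (hAred : IsFactorialReduced A)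
    (hBred : IsFactorialReduced B) (h : FactorialEquiv A B)
    (hA : ∀ j ∈ A, j ∈ S) (hB : ∀ j ∈ B, j ∈ S) : A = B := by
  have hsubA : A - B ≤ A := Multiset.sub_le_self A B
  have hsubB : B - A ≤ B := Multiset.sub_le_self B A
  have hmem : ∀ j ∈ A - B + (B - A), j ∈ S := fun j hj =>
    (Multiset.mem_add.1 hj).elim (fun hj => hA j (Multiset.mem_of_le hsubA hj))
      fun hj => hB j (Multiset.mem_of_le hsubB hj)
  have hle : ∀ j ∈ A - B + (B - A), j ≤ 6 :=
    forall_mem_le_of_forall_lt_prime (disjoint_sub_sub A B) h.sub_sub.2 fun j hj hlt =>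
      hS j (hmem j hj) fun hj6 => hlt.not_ge hj6.2
  have hIcc : ∀ j ∈ A - B + (B - A), j ∈ Finset.Icc 1 6 := fun j hj =>
    Finset.mem_Icc.2 ⟨pos_of_mem_of_forall_prime hS (hmem j hj), hle j hj⟩
  have hsub : A - B = B - A :=
    (hAred.mono hsubA).eq_of_factorialEquiv_of_le_six (hBred.mono hsubB) h.sub_sub
      (fun j hj => hIcc j (Multiset.mem_add.2 (.inl hj)))
      fun j hj => hIcc j (Multiset.mem_add.2 (.inr hj))
  rw [← Multiset.sub_add_inter A B, hsub, Multiset.inter_comm, Multiset.sub_add_inter]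

end Uniqueness

theorem MS_eq_ncard_isFactorialReduced {S : Set ℕ} (h6 : Set.Icc 1 6 ⊆ S)
    (hS : ∀ j ∈ S, j ∉ Set.Icc 1 6 → j.Prime) (n : ℕ) :
    MS S n = {A ∈ partitionsIn S n | IsFactorialReduced A}.ncard := by
  have h0 : 0 ∉ S := fun h0 => (pos_of_mem_of_forall_prime hS h0).false
  have himage : factorialProd '' partitionsIn S n
      = factorialProd '' {A ∈ partitionsIn S n | IsFactorialReduced A} := by
    refine Set.Subset.antisymm ?_ (Set.image_mono (Set.sep_subset _ _))
    rintro _ ⟨A, ⟨hsum, hA⟩, rfl⟩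
    obtain ⟨B, hB, hAB, hBred⟩ := exists_isFactorialReduced_factorialEquiv h6 hA
    exact ⟨B, ⟨⟨hAB.1.symm.trans hsum, hB⟩, hBred⟩, hAB.2.symm⟩
  rw [MS_eq_ncard_image_factorialProd h0, himage, Set.InjOn.ncard_image]
  rintro A ⟨⟨hAsum, hA⟩, hAred⟩ B ⟨⟨hBsum, hB⟩, hBred⟩ hAB
  exact hAred.eq_of_factorialEquiv hS hBred ⟨hAsum.trans hBsum.symm, hAB⟩ hA hB

theorem ncard_union_union_add_of_inter_subset {α : Type*} {s t u : Set α} (hs : s.Finite)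
    (ht : t.Finite) (hu : u.Finite) (hsu : s ∩ u ⊆ t) :
    (s ∪ t ∪ u).ncard + (s ∩ t).ncard + (t ∩ u).ncard = s.ncard + t.ncard + u.ncard := by
  have hst := Set.ncard_union_add_ncard_inter s t hs ht
  have hstu := Set.ncard_union_add_ncard_inter (s ∪ t) u (hs.union ht) hu
  have hinter : (s ∪ t) ∩ u = t ∩ u := by
    rw [Set.union_inter_distrib_right, Set.union_eq_right]
    exact Set.subset_inter hsu Set.inter_subset_right
  rw [hinter] at hstu
  omega

theorem ncard_sdiff_Ici_add_of_le_sup {α : Type*} [SemilatticeSup α] {T : Set α} (hT : T.Finite)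
    {x y z : α} (hxyz : y ≤ x ⊔ z) :
    (T \ (Set.Ici x ∪ Set.Ici y ∪ Set.Ici z)).ncard
        + (T ∩ Set.Ici x).ncard + (T ∩ Set.Ici y).ncard + (T ∩ Set.Ici z).ncard
      = T.ncard + (T ∩ Set.Ici (x ⊔ y)).ncard + (T ∩ Set.Ici (y ⊔ z)).ncard := by
  have hinter (u v : α) : T ∩ Set.Ici u ∩ (T ∩ Set.Ici v) = T ∩ Set.Ici (u ⊔ v) := by
    rw [← Set.inter_inter_distrib_left, Set.Ici_inter_Ici]
  have hxz : T ∩ Set.Ici x ∩ (T ∩ Set.Ici z) ⊆ T ∩ Set.Ici y := by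
    rw [hinter]
    exact Set.inter_subset_inter_right T (Set.Ici_subset_Ici.2 hxyz)
  have hunion := ncard_union_union_add_of_inter_subset (hT.inter_of_left _) (hT.inter_of_left _)
    (hT.inter_of_left _) hxz
  have hcompl := Set.ncard_inter_add_ncard_sdiff_eq_ncard T
    (Set.Ici x ∪ Set.Ici y ∪ Set.Ici z) hT
  rw [hinter, hinter, ← Set.inter_union_distrib_left, ← Set.inter_union_distrib_left] at hunion
  omega

theorem sep_isFactorialReduced (T : Set (Multiset ℕ)) :
    {A ∈ T | IsFactorialReduced A}
      = T \ (Set.Ici {2, 2, 3} ∪ Set.Ici {3, 5} ∪ Set.Ici {1, 4, 5}) := by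
  ext A
  simp only [IsFactorialReduced, Set.mem_sep_iff, Set.mem_sdiff, Set.mem_union, Set.mem_Ici,
    not_or, and_assoc]

theorem MS_six_seven_general {S : Set ℕ} (h6 : Set.Icc 1 6 ⊆ S)
    (hS : ∀ j ∈ S, j ∉ Set.Icc 1 6 → j.Prime) (n : ℕ) (hn : 13 ≤ n) :
    MS S n + pS S (n - 7) + pS S (n - 8) + pS S (n - 10)
      = pS S n + pS S (n - 12) + pS S (n - 13) := by
  have h0 : 0 ∉ S := fun h0 => (pos_of_mem_of_forall_prime hS h0).false
  have hcard (D : Multiset ℕ) (hD : ∀ j ∈ D, j ∈ Set.Icc 1 6) (hsum : D.sum ≤ 13) :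
      (partitionsIn S n ∩ Set.Ici D).ncard = pS S (n - D.sum) :=
    ncard_partitionsIn_inter_Ici h0 (fun j hj => h6 (hD j hj)) (hsum.trans hn)
  have hincl_excl := ncard_sdiff_Ici_add_of_le_sup (partitionsIn_finite h0 n)
    (show ({3, 5} : Multiset ℕ) ≤ {2, 2, 3} ⊔ {1, 4, 5} by decide)
  have hsup_223_35 : ({2, 2, 3} ⊔ {3, 5} : Multiset ℕ) = {2, 2, 3, 5} := by decide
  have hsup_35_145 : ({3, 5} ⊔ {1, 4, 5} : Multiset ℕ) = {3, 1, 4, 5} := by decide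
  rw [hsup_223_35, hsup_35_145, ← sep_isFactorialReduced, ← MS_eq_ncard_isFactorialReduced h6 hS,
    ← pS_eq_ncard_partitionsIn h0, hcard {2, 2, 3} (by simp) (by decide),
    hcard {3, 5} (by simp) (by decide), hcard {1, 4, 5} (by simp) (by decide),
    hcard {2, 2, 3, 5} (by simp) (by decide), hcard {3, 1, 4, 5} (by simp) (by decide)]
    at hincl_excl
  exact hincl_excl

/-- For `n ≥ 13` and `S = [6]` or `S = [7]`,
`M_S(n) + p_S(n−7) + p_S(n−8) + p_S(n−10) = p_S(n) + p_S(n−12) + p_S(n−13)`. -/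
theorem MS_six_seven (n : ℕ) (hn : 13 ≤ n) :
    ∀ S : Set ℕ, (S = Set.Icc 1 6 ∨ S = Set.Icc 1 7) →
      MS S n + pS S (n - 7) + pS S (n - 8) + pS S (n - 10)
        = pS S n + pS S (n - 12) + pS S (n - 13) := by
  rintro S (rfl | rfl) <;> refine MS_six_seven_general (by grind) (fun j hj hj6 => ?_) n hn
  exacts [absurd hj hj6, (show j = 7 by grind) ▸ Nat.prime_seven]
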